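/- (Per-coordinate expansion bound for the root coordinates.) Let (V,d) be a metric space and b : V → ℝ a 1-Lipschitz function with b(v) ≥ 1/2 for all v ∈ V, with scale weights p_t(v) as defined. Then for all u, v ∈ V, every t ∈ ℕ, every α ∈ [0,1] and β ∈ [0,4], and all reals x_v, x_u ≥ 0 with |x_v − x_u| ≤ d(u,v), one has |p_t(v)·g_{t,α,β}(x_v) − p_t(u)·g_{t,α,β}(x_u)| ≤ 12·d(u,v). -/

import Mathlib

/-- The sawtooth function `g_t(x) = 2^t - |x - (⌊x/2^{t+1}⌋·2^{t+1} + 2^t)|`. -/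
noncomputable def sawtooth (t : ℕ) (x : ℝ) : ℝ :=
  2 ^ t - |x - ((⌊x / 2 ^ (t + 1)⌋ : ℝ) * 2 ^ (t + 1) + 2 ^ t)|

/-!
The sawtooth `g_t` is the distance to the lattice `2^{t+1}ℤ`, that is, the norm on a circle of
length `2^{t+1}`; hence it is `1`-Lipschitz with values in `[0, 2^t]`. The scale weight is
`p_t(v) = φ(2 b(v) / 2^t)` for a single `2`-Lipschitz tent `φ` with values in `[0, 1]`. Splitting
`p g - p' g' = (p - p') g + p' (g - g')`, the factor `2^{-t}` in the variation of the weight cancels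
the height `2^t` of the sawtooth, which gives the constant `4 + |β|`.
-/

lemma sawtooth_eq_norm_addCircle (t : ℕ) (x : ℝ) :
    sawtooth t x = ‖(x : AddCircle ((2 : ℝ) ^ (t + 1)))‖ := by
  have hp : (0 : ℝ) < 2 ^ (t + 1) := by positivity
  have hx : x = (⌊x / 2 ^ (t + 1)⌋ + Int.fract (x / 2 ^ (t + 1))) * 2 ^ (t + 1) := by
    rw [Int.floor_add_fract, div_mul_cancel₀ _ hp.ne']
  have hcentre : x - (⌊x / 2 ^ (t + 1)⌋ * 2 ^ (t + 1) + 2 ^ t)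
      = 2 ^ t * (Int.fract (x / 2 ^ (t + 1)) - (1 - Int.fract (x / 2 ^ (t + 1)))) := by
    linear_combination hx
  rw [AddCircle.norm_eq' _ hp, inv_mul_eq_div, abs_sub_round_eq_min,
    inf_eq_half_smul_add_sub_abs_sub' ℝ, smul_eq_mul, abs_sub_comm,
    sawtooth, hcentre, abs_mul, abs_of_pos (by positivity : (0 : ℝ) < 2 ^ t)]
  ring

lemma sawtooth_nonneg (t : ℕ) (x : ℝ) : 0 ≤ sawtooth t x := by
  rw [sawtooth_eq_norm_addCircle]
  exact norm_nonneg _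

lemma sawtooth_le (t : ℕ) (x : ℝ) : sawtooth t x ≤ 2 ^ t :=
  sub_le_self _ (abs_nonneg _)

lemma lipschitzWith_sawtooth (t : ℕ) : LipschitzWith 1 (sawtooth t) :=
  .mk_one fun x y ↦ by
    simp only [Real.dist_eq, sawtooth_eq_norm_addCircle]
    exact (abs_norm_sub_norm_le _ _).trans (QuotientAddGroup.norm_mk_le_norm (m := x - y))

/-- The piecewise linear tent supported on `[1/2, 2]` with peak `1` at `1`. The scale weight
`p_t(v)` is its value at `2 b(v) / 2^t`. -/
noncomputable def scaleTent (r : ℝ) : ℝ :=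
  max 0 (min (2 * r - 1) (2 - r))

namespace scaleTent

lemma nonneg (r : ℝ) : 0 ≤ scaleTent r :=
  le_max_left _ _

lemma le_one (r : ℝ) : scaleTent r ≤ 1 := by
  refine max_le zero_le_one (min_le_iff.2 ?_)
  rcases le_total r 1 with hr | hr
  · exact .inl (by linarith)
  · exact .inr (by linarith)

lemma lipschitzWith : LipschitzWith 2 scaleTent := by
  have hrising : LipschitzWith 2 fun r : ℝ ↦ 2 * r - 1 :=
    .of_dist_le_mul fun r s ↦ by
      rw [dist_sub_right, Real.dist_eq, Real.dist_eq, ← mul_sub, abs_mul, abs_two, NNReal.coe_ofNat]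
  have hfalling : LipschitzWith 1 fun r : ℝ ↦ 2 - r :=
    .mk_one fun r s ↦ (dist_sub_left 2 r s).le
  have htent := (hrising.min hfalling).const_max 0
  rwa [max_eq_left one_le_two] at htent

lemma eq_zero_of_le_half {r : ℝ} (hr : r ≤ 1 / 2) : scaleTent r = 0 :=
  max_eq_left <| (min_le_left _ _).trans (by linarith)

lemma eq_zero_of_two_le {r : ℝ} (hr : 2 ≤ r) : scaleTent r = 0 :=
  max_eq_left <| (min_le_right _ _).trans (by linarith)

lemma eq_two_mul_sub_one {r : ℝ} (hr : r ∈ Set.Icc (1 / 2) 1) : scaleTent r = 2 * r - 1 := by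
  obtain ⟨hhalf, hone⟩ := hr
  rw [scaleTent, min_eq_left (by linarith), max_eq_right (by linarith)]

lemma eq_two_sub {r : ℝ} (hr : r ∈ Set.Icc 1 2) : scaleTent r = 2 - r := by
  obtain ⟨hone, htwo⟩ := hr
  rw [scaleTent, min_eq_right (by linarith), max_eq_right (by linarith)]

end scaleTent

lemma ite_weight_eq_scaleTent (t : ℕ) {s : ℕ} {y : ℝ} (hs : 2 ^ s ≤ y) (hs' : y < 2 ^ (s + 1)) :
    (if t = s then 1 - (y - 2 ^ s) / 2 ^ s else if t = s + 1 then (y - 2 ^ s) / 2 ^ s else 0)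
      = scaleTent (y / 2 ^ t) := by
  have hpow (n : ℕ) : (0 : ℝ) < 2 ^ n := by positivity
  split_ifs with hts hts'
  · subst hts
    rw [pow_succ'] at hs'
    rw [scaleTent.eq_two_sub ⟨(one_le_div (hpow t)).2 hs, (div_le_iff₀ (hpow t)).2 hs'.le⟩,
      sub_div, div_self (hpow t).ne']
    ring
  · subst hts'
    have hhalf : 1 / 2 ≤ y / 2 ^ (s + 1) := by
      rw [le_div_iff₀ (hpow _), pow_succ]
      linarith
    rw [scaleTent.eq_two_mul_sub_one ⟨hhalf, (div_le_one (hpow _)).2 hs'.le⟩]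
    field_simp
    ring
  · rcases lt_or_ge t s with hlt | hge
    · refine (scaleTent.eq_zero_of_two_le ?_).symm
      rw [le_div_iff₀ (hpow t), ← pow_succ']
      exact (pow_le_pow_right₀ one_le_two hlt).trans hs
    · refine (scaleTent.eq_zero_of_le_half ?_).symm
      have hst : (2 : ℝ) ^ (s + 1 + 1) ≤ 2 ^ t := pow_le_pow_right₀ one_le_two (by lia)
      rw [div_le_iff₀ (hpow t)]
      rw [pow_succ] at hst
      linarith

lemma abs_scaleTent_mul_sawtooth_sub_le (t : ℕ) (y y' z z' : ℝ) :
    |scaleTent (y / 2 ^ t) * sawtooth t z - scaleTent (y' / 2 ^ t) * sawtooth t z'|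
      ≤ 2 * |y - y'| + |z - z'| := by
  have hweight : |scaleTent (y / 2 ^ t) - scaleTent (y' / 2 ^ t)| * 2 ^ t ≤ 2 * |y - y'| := by
    have h := scaleTent.lipschitzWith.dist_le_mul (y / 2 ^ t) (y' / 2 ^ t)
    rwa [Real.dist_eq, Real.dist_eq, NNReal.coe_ofNat, ← sub_div, abs_div,
      abs_of_pos (by positivity : (0 : ℝ) < 2 ^ t), ← mul_div_assoc,
      le_div_iff₀ (by positivity)] at h
  have hsawtooth : |sawtooth t z - sawtooth t z'| ≤ |z - z'| := by
    simpa only [Real.dist_eq, NNReal.coe_one, one_mul]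
      using (lipschitzWith_sawtooth t).dist_le_mul z z'
  calc |scaleTent (y / 2 ^ t) * sawtooth t z - scaleTent (y' / 2 ^ t) * sawtooth t z'|
      = |(scaleTent (y / 2 ^ t) - scaleTent (y' / 2 ^ t)) * sawtooth t z
          + scaleTent (y' / 2 ^ t) * (sawtooth t z - sawtooth t z')| := by ring_nf
    _ ≤ |scaleTent (y / 2 ^ t) - scaleTent (y' / 2 ^ t)| * sawtooth t z
          + scaleTent (y' / 2 ^ t) * |sawtooth t z - sawtooth t z'| := by
        refine (abs_add_le _ _).trans_eq ?_
        rw [abs_mul, abs_mul, abs_of_nonneg (sawtooth_nonneg t z),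
          abs_of_nonneg (scaleTent.nonneg _)]
    _ ≤ |scaleTent (y / 2 ^ t) - scaleTent (y' / 2 ^ t)| * 2 ^ t + 1 * |z - z'| :=
        add_le_add (mul_le_mul_of_nonneg_left (sawtooth_le t z) (abs_nonneg _))
          (mul_le_mul (scaleTent.le_one _) hsawtooth (abs_nonneg _) zero_le_one)
    _ ≤ 2 * |y - y'| + |z - z'| := by linarith

theorem root_coordinate_expansion_general {V : Type*} [PseudoMetricSpace V] (b : V → ℝ)
    (hLip : ∀ u v : V, |b v - b u| ≤ dist u v) (tv : V → ℕ)
    (htv : ∀ v : V, (2 : ℝ) ^ (tv v) ≤ 2 * b v ∧ 2 * b v < 2 ^ (tv v + 1))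
    (lam : V → ℝ) (hlam : ∀ v : V, lam v = (2 * b v - 2 ^ (tv v)) / 2 ^ (tv v))
    (pw : ℕ → V → ℝ)
    (hpw : ∀ (t : ℕ) (v : V), pw t v =
      if t = tv v then 1 - lam v else if t = tv v + 1 then lam v else 0)
    (u v : V) (t : ℕ) (α β : ℝ) {xv xu : ℝ} (hx : |xv - xu| ≤ dist u v) :
    |pw t v * sawtooth t (β * xv + α * 2 ^ (t + 1))
        - pw t u * sawtooth t (β * xu + α * 2 ^ (t + 1))| ≤ (4 + |β|) * dist u v := by
  have hweight (w : V) : pw t w = scaleTent (2 * b w / 2 ^ t) := by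
    rw [hpw, hlam, ite_weight_eq_scaleTent t (htv w).1 (htv w).2]
  rw [hweight, hweight]
  calc |scaleTent (2 * b v / 2 ^ t) * sawtooth t (β * xv + α * 2 ^ (t + 1))
        - scaleTent (2 * b u / 2 ^ t) * sawtooth t (β * xu + α * 2 ^ (t + 1))|
      ≤ 2 * |2 * b v - 2 * b u|
          + |(β * xv + α * 2 ^ (t + 1)) - (β * xu + α * 2 ^ (t + 1))| :=
        abs_scaleTent_mul_sawtooth_sub_le t _ _ _ _
    _ = 4 * |b v - b u| + |β| * |xv - xu| := by
        rw [add_sub_add_right_eq_sub, ← mul_sub, ← mul_sub, abs_mul, abs_mul, abs_two]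
        ring
    _ ≤ 4 * dist u v + |β| * dist u v := by gcongr; exact hLip u v
    _ = (4 + |β|) * dist u v := (add_mul _ _ _).symm

/-- Per-coordinate expansion bound for the root coordinates: with the scale weights
`p_t` built from a `1`-Lipschitz function `b ≥ 1/2`, for every `t`, every `α ∈ [0,1]`,
`β ∈ [0,4]`, and all `x_v, x_u ≥ 0` with `|x_v - x_u| ≤ d(u,v)`,
`|p_t(v)·g_{t,α,β}(x_v) - p_t(u)·g_{t,α,β}(x_u)| ≤ 12·d(u,v)`. -/
theorem root_coordinate_expansion {V : Type*} [MetricSpace V] (b : V → ℝ)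
    (hLip : ∀ u v : V, |b v - b u| ≤ dist u v) (hb : ∀ v : V, (1 : ℝ) / 2 ≤ b v)
    (tv : V → ℕ)
    (htv : ∀ v : V, (2 : ℝ) ^ (tv v) ≤ 2 * b v ∧ 2 * b v < 2 ^ (tv v + 1))
    (lam : V → ℝ) (hlam : ∀ v : V, lam v = (2 * b v - 2 ^ (tv v)) / 2 ^ (tv v))
    (pw : ℕ → V → ℝ)
    (hpw : ∀ (t : ℕ) (v : V), pw t v =
      if t = tv v then 1 - lam v else if t = tv v + 1 then lam v else 0) :
    ∀ (u v : V) (t : ℕ) (α β : ℝ), α ∈ Set.Icc (0 : ℝ) 1 → β ∈ Set.Icc (0 : ℝ) 4 →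
      ∀ xv xu : ℝ, 0 ≤ xv → 0 ≤ xu → |xv - xu| ≤ dist u v →
        |pw t v * sawtooth t (β * xv + α * 2 ^ (t + 1))
            - pw t u * sawtooth t (β * xu + α * 2 ^ (t + 1))| ≤ 12 * dist u v := by
  intro u v t α β _ hβ xv xu _ _ hx
  refine (root_coordinate_expansion_general b hLip tv htv lam hlam pw hpw u v t α β hx).trans ?_
  gcongr
  linarith [abs_of_nonneg hβ.1, hβ.2]
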